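/- Let (S,T) be modular data on Φ. Then for every ring automorphism τ of ℂ there exist a permutation g of Φ and a function ε : Φ → {1,-1} such that τ(S_{ab}) = ε(a) · S_{ga,b} = ε(b) · S_{a,gb} for all a, b ∈ Φ. Moreover all entries of S are cyclotomic numbers: there exists n ≥ 1 such that S_{ab} ∈ ℚ(e^{2πi/n}) for all a, b ∈ Φ. -/

import Mathlib

open scoped BigOperators
open Complex

/-- Modular data on a finite set `Φ` with distinguished element `zero`: a unitary symmetric
matrix `S`, a diagonal matrix `T` of finite order, with the `zero`-row of `S` real and
strictly positive, `S² = (ST)³`, and nonnegative-integer fusion coefficients `N a b c` given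
by Verlinde's formula. -/
structure ModularData (Φ : Type) [Fintype Φ] [DecidableEq Φ] where
  zero : Φ
  S : Matrix Φ Φ ℂ
  T : Matrix Φ Φ ℂ
  N : Φ → Φ → Φ → ℕ
  S_unitary : S * S.conjTranspose = 1
  S_symm : ∀ a b, S a b = S b a
  T_diag : ∀ a b, a ≠ b → T a b = 0
  T_order : ∃ m : ℕ, 0 < m ∧ T ^ m = 1
  S_zero_pos : ∀ a, (S zero a).im = 0 ∧ 0 < (S zero a).re
  modular_rel : S ^ 2 = (S * T) ^ 3
  verlinde : ∀ a b c,
    (N a b c : ℂ) = ∑ d, S a d * S b d * (starRingEnd ℂ) (S c d) / S zero d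

/-!
Verlinde's formula says that the columns of `S`, normalised at `0`, are exactly the characters of
the fusion ring. A field automorphism permutes these characters, so it permutes the columns of `S`
up to scalars, and since `S²` has rational entries the scalars are signs.

For cyclotomicity let `T ^ m = 1` and let `L` be generated by the entries of `S` and the `2m`-th
roots of unity. The two expressions for `τ(S_{ab})` make any two automorphisms commute on `S`, so
`L` is abelian over `ℚ`. Comparing `S = TSTST` with its image under an automorphism that fixes `T`
shows that `x = S_{ab}` satisfies `σ(x²) = x²` for all `σ` fixing the `m`-th roots of unity. This
replaces the Kronecker–Weber theorem: such an `x` lies in the field generated by the `2m`-th roots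
of unity and the square roots in `L` of rational numbers, which are cyclotomic by Gauss sums.

By Galois theory this amounts to `σ x = x` for each `σ` fixing those generators. Such a `σ` is a
square `τ²`, as otherwise a quadratic character of the Galois group would separate it from the
squares. Split `τ` along the prime powers dividing `m`. At an odd prime power `p ^ k` the Galois
group is cyclic modulo the automorphisms fixing `ζ_{p ^ k}`, with an inertia element `t` as
generator; if a power of `t` fixed `ζ_m` and negated `x`, reducing at a place over `p` and comparing
`t` with a Frobenius element would give `1 = -1` in characteristic `p`. At `2` a square root of `1`
modulo `2 ^ (n + 1)` is `±1` modulo `2 ^ n`, and the sign is absorbed by complex conjugation.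
-/

lemma exists_monoidHom_ne_one_of_not_isSquare (R : Type*) [CommRing R] [IsDomain R]
    (hR : ringChar R ≠ 2) {G : Type*} [CommGroup G] [Finite G] {g : G} (hg : ¬IsSquare g) :
    ∃ χ : G →* Rˣ, χ g ≠ 1 ∧ ∀ h, χ h ^ 2 = 1 := by
  let H : Subgroup G := (powMonoidHom 2).range
  have hexp : Monoid.exponent (G ⧸ H) ∣ 2 := Monoid.exponent_dvd_of_forall_pow_eq_one fun x => by
    obtain ⟨x, rfl⟩ := QuotientGroup.mk'_surjective H x
    rw [← map_pow]
    exact (QuotientGroup.eq_one_iff _).mpr ⟨x, rfl⟩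
  have : HasEnoughRootsOfUnity R 2 :=
    ⟨⟨-1, .neg_one (ringChar R) hR⟩, inferInstance⟩
  have : HasEnoughRootsOfUnity R (Monoid.exponent (G ⧸ H)) := .of_dvd R hexp
  have hg' : (g : G ⧸ H) ≠ 1 := fun h => by
    obtain ⟨x, hx⟩ := (QuotientGroup.eq_one_iff g).mp h
    exact hg ⟨x, hx.symm.trans (sq x)⟩
  obtain ⟨φ, hφ⟩ := CommGroup.exists_apply_ne_one_of_hasEnoughRootsOfUnity (G ⧸ H) R hg'
  refine ⟨φ.comp (QuotientGroup.mk' H), hφ, fun h => ?_⟩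
  have h_sq : QuotientGroup.mk' H (h ^ 2) = 1 := (QuotientGroup.eq_one_iff _).mpr ⟨h, rfl⟩
  rw [← map_pow, MonoidHom.comp_apply, h_sq, map_one]

-- A sign character of the Galois group is a 1-cocycle, and Hilbert 90 splits it.
open scoped IsMulCommutative in
theorem exists_sq_mem_bot_apply_eq_neg {F L : Type*} [Field F] [Field L] [Algebra F L]
    [IsAbelianGalois F L] [FiniteDimensional F L] (hL : ringChar L ≠ 2)
    {σ : Gal(L/F)} (hσ : ¬IsSquare σ) :
    ∃ w : L, w ≠ 0 ∧ w ^ 2 ∈ (⊥ : IntermediateField F L) ∧ σ w = -w := by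
  obtain ⟨χ, hχσ, hχ⟩ := exists_monoidHom_ne_one_of_not_isSquare L hL hσ
  have hχ_sign : ∀ g, χ g = 1 ∨ χ g = -1 := fun g => by
    simpa only [Units.ext_iff, Units.val_pow_eq_pow_val, Units.val_neg, Units.val_one,
      sq_eq_one_iff] using hχ g
  have h_cocycle : groupCohomology.IsMulCocycle₁ χ := fun g h => by
    rw [map_mul, mul_comm]
    rcases hχ_sign h with hh | hh <;> simp [hh]
  obtain ⟨β, hβ⟩ :=
    groupCohomology.isMulCoboundary₁_of_isMulCocycle₁_of_aut_to_units χ h_cocycle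
  have hβ' : ∀ g : Gal(L/F), g β = χ g * β := fun g => by
    rw [← hβ g, ← Units.val_mul, div_mul_cancel]
    rfl
  refine ⟨β, β.ne_zero, (IsGalois.mem_bot_iff_fixed _).mpr fun g => ?_, ?_⟩
  · rw [map_pow, hβ', mul_pow, ← Units.val_pow_eq_pow_val, hχ, Units.val_one, one_mul]
  · rw [hβ', (hχ_sign σ).resolve_left hχσ, Units.val_neg, Units.val_one, neg_one_mul]

section ValuationRings

open IsLocalRing

-- If `σ` decreased `v y`, then `v (σⁿ y)` would decrease forever, although `σ` has finite order.
lemma valuation_apply_eq_of_isOfFinOrder {F K Γ₀ : Type*} [Field F] [Field K] [Algebra F K]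
    [LinearOrderedCommGroupWithZero Γ₀] (v : Valuation K Γ₀) {σ : Gal(K/F)} (hσ : IsOfFinOrder σ)
    (h : ∀ a, v a < 1 → v (σ a) < 1) (x : K) : v (σ x) = v x := by
  have h_not_lt : ∀ y, ¬v (σ y) < v y := fun y hy => by
    have hy₀ : 0 < v y := zero_le.trans_lt hy
    have h_anti : StrictAnti fun n : ℕ => v ((σ ^ n) y) := strictAnti_nat_of_succ_lt fun n => by
      have h_quot : ∀ n : ℕ, v ((σ ^ n) (σ y / y)) < 1 := fun n => by
        induction n with
        | zero => simpa only [pow_zero, AlgEquiv.one_apply, map_div₀, div_lt_one₀ hy₀] using hy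
        | succ n ih => simpa only [pow_succ', AlgEquiv.mul_apply] using h _ ih
      have hn₀ : 0 < v ((σ ^ n) y) :=
        zero_lt_iff.mpr ((v.ne_zero_iff).mpr ((map_ne_zero (σ ^ n)).mpr (v.pos_iff.mp hy₀)))
      simpa only [map_div₀, div_lt_one₀ hn₀, pow_succ, AlgEquiv.mul_apply] using h_quot n
    obtain ⟨n, hn, hσn⟩ := isOfFinOrder_iff_pow_eq_one.mp hσ
    simpa only [pow_zero, hσn, lt_self_iff_false] using h_anti hn
  rcases eq_or_ne x 0 with rfl | hx
  · rw [map_zero]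
  refine (le_of_not_gt ?_).antisymm (le_of_not_gt (h_not_lt x))
  intro h_gt
  refine h_not_lt x⁻¹ ?_
  rw [map_inv₀, map_inv₀, map_inv₀]
  exact inv_strictAnti₀ (v.pos_iff.mpr hx) h_gt

/-- The automorphism `σ` of `K` maps the valuation ring `A` to itself and raises residue
classes to the power `n`: inertia elements are those with `n = 1`, Frobenius elements those with
`n` the size of a residue field. -/
def ActsAsPow {F K : Type*} [Field F] [Field K] [Algebra F K] (A : ValuationSubring K)
    (σ : Gal(K/F)) (n : ℕ) : Prop :=
  ∀ a : A, ∃ b : A, (b : K) = σ a ∧ residue A b = residue A a ^ n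

namespace ActsAsPow

variable {F K : Type*} [Field F] [Field K] [Algebra F K] {A : ValuationSubring K}
  {σ τ : Gal(K/F)} {m n : ℕ}

lemma one : ActsAsPow A (1 : Gal(K/F)) 1 := fun a => ⟨a, rfl, (pow_one _).symm⟩

lemma mul (hσ : ActsAsPow A σ m) (hτ : ActsAsPow A τ n) :
    ActsAsPow A (σ * τ) (m * n) := fun a => by
  obtain ⟨b, hb, hab⟩ := hτ a
  obtain ⟨c, hc, hbc⟩ := hσ b
  exact ⟨c, by rw [hc, hb, AlgEquiv.mul_apply], by rw [hbc, hab, ← pow_mul, mul_comm]⟩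

lemma pow (h : ActsAsPow A σ n) (i : ℕ) : ActsAsPow A (σ ^ i) (n ^ i) := by
  induction i with
  | zero => exact one
  | succ i ih => exact ih.mul h

lemma valuation_apply (h : ActsAsPow A σ n) (hn : n ≠ 0) (hσ : IsOfFinOrder σ) (x : K) :
    A.valuation (σ x) = A.valuation x := by
  refine valuation_apply_eq_of_isOfFinOrder _ hσ (fun a ha => ?_) x
  lift a to A using (A.valuation_le_one_iff a).mp ha.le
  obtain ⟨b, hb, hab⟩ := h a
  rw [← hb, ← A.valuation_lt_one_iff, ← residue_eq_zero_iff, hab, pow_eq_zero_iff hn,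
    residue_eq_zero_iff]
  exact (A.valuation_lt_one_iff a).mpr ha

-- In the residue field `hzw` reads `w z = z ^ p w`, whence `z ^ (p - 1) = 1` and the product
-- is `1`.
theorem prod_range_pow_apply_ne_neg_one {p : ℕ} [CharP (ResidueField A) p] (hp : p.Prime)
    (hp₂ : p ≠ 2) {t φ : Gal(K/F)} (ht : ActsAsPow A t 1) (hφ : ActsAsPow A φ p)
    (ht_fin : IsOfFinOrder t) (hφ_fin : IsOfFinOrder φ) {α z w : K} (hα : α ≠ 0)
    (hz : z ^ 2 * α = t α) (hw : w ^ 2 * α = φ α) (hzw : t w * z = φ z * w) {r : ℕ}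
    (hr : p - 1 ∣ r) :
    ∏ i ∈ Finset.range r, (t ^ i) z ≠ -1 := by
  have hv : ∀ {σ : Gal(K/F)} {y : K}, A.valuation (σ α) = A.valuation α → y ^ 2 * α = σ α →
      A.valuation y = 1 := fun h hy => by
    rw [← hy, map_mul, map_pow, mul_eq_right₀ ((A.valuation.ne_zero_iff).mpr hα)] at h
    exact (pow_eq_one_iff_of_nonneg zero_le two_ne_zero).mp h
  have hvz := hv (ht.valuation_apply one_ne_zero ht_fin α) hz
  have hvw := hv (hφ.valuation_apply hp.ne_zero hφ_fin α) hw
  lift z to A using (A.valuation_le_one_iff z).mp hvz.le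
  lift w to A using (A.valuation_le_one_iff w).mp hvw.le
  have hz₀ : residue A z ≠ 0 := by
    rwa [residue_ne_zero_iff_isUnit, A.valuation_eq_one_iff]
  have hw₀ : residue A w ≠ 0 := by
    rwa [residue_ne_zero_iff_isUnit, A.valuation_eq_one_iff]
  have hz_pow : residue A z ^ (p - 1) = 1 := by
    obtain ⟨w', hw', hres_w⟩ := ht w
    obtain ⟨z', hz', hres_z⟩ := hφ z
    have h_eq : w' * z = z' * w := Subtype.ext (by push_cast; rw [hw', hz', hzw])
    have h_res := congrArg (residue A) h_eq
    rw [map_mul, map_mul, hres_w, hres_z, pow_one, mul_comm, mul_left_inj' hw₀,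
      ← mul_pow_sub_one hp.ne_zero] at h_res
    exact (mul_eq_left₀ hz₀).mp h_res.symm
  choose y hy hy_res using fun i : ℕ => ht.pow i z
  intro h_prod
  have h_neg : ∏ i ∈ Finset.range r, y i = -1 := Subtype.ext (by simpa [hy] using h_prod)
  have h_one : residue A (∏ i ∈ Finset.range r, y i) = 1 := by
    obtain ⟨q, rfl⟩ := hr
    simp only [map_prod, hy_res, one_pow, pow_one, Finset.prod_const, Finset.card_range, pow_mul,
      hz_pow]
  rw [h_neg, map_neg, map_one] at h_one
  exact Ring.neg_one_ne_one_of_char_ne_two (ringChar.eq (ResidueField A) p ▸ hp₂) h_one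

end ActsAsPow

lemma exists_valuationSubring_charP_residueField (K : Type*) [Field K] [CharZero K] {p : ℕ}
    (hp : p.Prime) : ∃ A : ValuationSubring K, CharP (ResidueField A) p := by
  let p' : (Int.castRingHom K).range := ⟨p, p, by simp⟩
  have hp' : Ideal.span {p'} ≠ ⊤ := fun h => by
    obtain ⟨⟨-, u, rfl⟩, hu⟩ := isUnit_iff_exists_inv.mp (Ideal.span_singleton_eq_top.mp h)
    have hpu : ((p * u : ℤ) : K) = 1 := by simpa [p'] using congrArg Subtype.val hu
    exact (Nat.prime_iff_prime_int.mp hp).not_isUnit (.of_mul_eq_one u (by exact_mod_cast hpu))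
  obtain ⟨A, -, hA⟩ := Ideal.image_subset_nonunits_valuationSubring _ hp'
  obtain ⟨_, hp_max⟩ := ValuationSubring.mem_nonunits_iff_exists_mem_maximalIdeal.mp
    (hA ⟨p', Ideal.mem_span_singleton_self p', rfl⟩)
  refine ⟨A, ringChar.of_eq (CharP.ringChar_of_prime_eq_zero hp ?_)⟩
  rw [← map_natCast (residue A), residue_eq_zero_iff]
  exact hp_max

section RingOfIntegers

open NumberField

variable {K : Type*} [Field K] (A : ValuationSubring K)

/-- The inclusion of the ring of integers of `K` into a valuation ring of `K`. -/
noncomputable def integersToValuationSubring : 𝓞 K →+* A :=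
  (algebraMap (𝓞 K) K).codRestrict A.toSubring fun x => by
    obtain ⟨y, hy⟩ := IsIntegrallyClosed.isIntegral_iff.mp
      ((RingOfIntegers.isIntegral_coe x).tower_top (A := A))
    exact hy ▸ y.2

lemma exists_mul_integersToValuationSubring_eq [NumberField K] {p : ℕ}
    [CharP (ResidueField A) p] (hp : p ≠ 0) (a : A) :
    ∃ n d, residue A (integersToValuationSubring A d) ≠ 0 ∧
      a * integersToValuationSubring A d = integersToValuationSubring A n := by
  let f := integersToValuationSubring A
  let P : IsDedekindDomain.HeightOneSpectrum (𝓞 K) :=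
    ⟨RingHom.ker ((residue A).comp f), RingHom.ker_isPrime _, fun h => by
      have hpP : (p : 𝓞 K) ∈ RingHom.ker ((residue A).comp f) := by
        rw [RingHom.mem_ker, map_natCast, CharP.cast_eq_zero]
      rw [h, Ideal.mem_bot, Nat.cast_eq_zero] at hpP
      exact hp hpP⟩
  obtain ⟨n, ⟨d, hd⟩, h | h⟩ := P.exists_primeCompl_mul_eq_or_mul_eq (a : K)
  · exact ⟨n, d, hd, Subtype.ext h⟩
  · have h' : a * f n = f d := Subtype.ext h
    refine ⟨d, n, fun hn => hd ?_, h'⟩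
    change residue A (f d) = 0
    rw [← h', map_mul, hn, mul_zero]

lemma ringHom_ext_toInteger [CharZero K] {R : Type*} [Ring R] {n : ℕ} [NeZero n]
    [IsCyclotomicExtension {n} ℚ K] {ζ : K} (hζ : IsPrimitiveRoot ζ n) {f g : 𝓞 K →+* R}
    (h : f hζ.toInteger = g hζ.toInteger) : f = g :=
  congrArg AlgHom.toRingHom (AlgHom.ext_of_adjoin_eq_top (φ₁ := f.toIntAlgHom)
    (φ₂ := g.toIntAlgHom) (IsCyclotomicExtension.Rat.adjoin_singleton_eq_top hζ)
    (by rintro _ rfl; exact h))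

-- It suffices to compare `σ` with a power of Frobenius on `ζ`, and there only after raising to the
-- power `p ^ k`, because Frobenius is injective on the residue field.
theorem actsAsPow_of_forall_pow_eq_one [inst : Algebra ℚ K] {p k e j : ℕ} [hp : Fact p.Prime]
    [CharP (ResidueField A) p] [NeZero (p ^ k * e)] [IsCyclotomicExtension {p ^ k * e} ℚ K]
    {σ : Gal(K/ℚ)} (hσ : ∀ z, z ^ e = 1 → σ z = z ^ p ^ j) : ActsAsPow A σ (p ^ j) := by
  have : CharZero K := algebraRat.charZero K
  obtain rfl : inst = DivisionRing.toRatAlgebra := Subsingleton.elim _ _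
  have : NumberField K := IsCyclotomicExtension.numberField {p ^ k * e} ℚ K
  let f := integersToValuationSubring A
  let σ' : 𝓞 K →+* 𝓞 K := RingOfIntegers.mapRingHom (σ : K →+* K)
  have h_frob : ((residue A).comp f).comp σ' =
      (iterateFrobenius (ResidueField A) p j).comp ((residue A).comp f) := by
    have hζ := IsCyclotomicExtension.zeta_spec (p ^ k * e) ℚ K
    have h_pow : σ' hζ.toInteger ^ p ^ k = (hζ.toInteger ^ p ^ j) ^ p ^ k := by
      refine RingOfIntegers.ext ?_
      rw [← map_pow, pow_right_comm]
      refine hσ _ ?_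
      rw [← map_pow, ← pow_mul, hζ.toInteger_isPrimitiveRoot.pow_eq_one, map_one]
    refine ringHom_ext_toInteger hζ (iterateFrobenius_inj (ResidueField A) p k ?_)
    have := congrArg ((residue A).comp f) h_pow
    rwa [map_pow, map_pow, map_pow] at this
  intro a
  obtain ⟨n, d, hd, had⟩ := exists_mul_integersToValuationSubring_eq A hp.out.ne_zero a
  have hσd : residue A (f (σ' d)) = residue A (f d) ^ p ^ j := RingHom.congr_fun h_frob d
  have hσn : residue A (f (σ' n)) = residue A (f n) ^ p ^ j := RingHom.congr_fun h_frob n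
  have hσd₀ : residue A (f (σ' d)) ≠ 0 := by
    rw [hσd]
    exact pow_ne_zero _ hd
  have hσd₁ : f (σ' d) ≠ 0 := fun h => hσd₀ (by rw [h, map_zero])
  obtain ⟨b, hb⟩ := ((residue_ne_zero_iff_isUnit _).mp hσd₀).dvd (a := f (σ' n))
  refine ⟨b, ?_, ?_⟩
  · refine mul_left_cancel₀ (ZeroMemClass.coe_eq_zero.not.mpr hσd₁) ?_
    calc (f (σ' d) * b : K) = f (σ' n) := by rw [hb, A.coe_mul]
      _ = σ (f n) := rfl
      _ = σ (f d) * σ a := by rw [← had, A.coe_mul, map_mul, mul_comm]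
  · refine mul_left_cancel₀ hσd₀ ?_
    rw [← map_mul, ← hb, hσn, ← had, map_mul, mul_pow, hσd, mul_comm]

end RingOfIntegers

end ValuationRings

section RootsOfUnity

variable {F L : Type*} [Field F] [Field L] [Algebra F L]

variable (F L) in
/-- The subgroup of the automorphisms of `L` over `F` that act trivially on the `n`-th roots of
unity of `L`. -/
def fixingRootsOfUnity (n : ℕ) : Subgroup Gal(L/F) :=
  fixingSubgroup Gal(L/F) {z : L | z ^ n = 1}

variable {σ τ : Gal(L/F)} {m n : ℕ}

lemma mem_fixingRootsOfUnity :
    σ ∈ fixingRootsOfUnity F L n ↔ ∀ z : L, z ^ n = 1 → σ z = z :=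
  mem_fixingSubgroup_iff _

lemma fixingRootsOfUnity_anti (h : m ∣ n) : fixingRootsOfUnity F L n ≤ fixingRootsOfUnity F L m :=
  fixingSubgroup_antitone _ _ fun _ hz => orderOf_dvd_iff_pow_eq_one.mp
    ((orderOf_dvd_of_pow_eq_one hz).trans h)

lemma fixingRootsOfUnity_mul (h : m.Coprime n) :
    fixingRootsOfUnity F L (m * n) = fixingRootsOfUnity F L m ⊓ fixingRootsOfUnity F L n := by
  refine le_antisymm (le_inf (fixingRootsOfUnity_anti (dvd_mul_right m n))
    (fixingRootsOfUnity_anti (dvd_mul_left n m))) fun σ ⟨hm, hn⟩ =>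
      mem_fixingRootsOfUnity.mpr fun z hz => ?_
  rcases eq_or_ne z 0 with rfl | hz₀
  · rw [map_zero]
  have hm' : (σ z / z) ^ m = 1 := by
    rw [div_pow, ← map_pow, mem_fixingRootsOfUnity.mp hn _ (by rw [← pow_mul, hz]),
      div_self (pow_ne_zero m hz₀)]
  have hn' : (σ z / z) ^ n = 1 := by
    rw [div_pow, ← map_pow, mem_fixingRootsOfUnity.mp hm _ (by rw [← pow_mul, mul_comm, hz]),
      div_self (pow_ne_zero n hz₀)]
  have h_one := pow_gcd_eq_one.mpr ⟨hm', hn'⟩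
  rw [h.gcd_eq_one, pow_one] at h_one
  exact eq_of_div_eq_one h_one

lemma exists_forall_apply_eq_pow (hn : n ≠ 0) {ζ : L} (hζ : IsPrimitiveRoot ζ n)
    (σ : Gal(L/F)) : ∃ v, v.Coprime n ∧ ∀ z : L, z ^ n = 1 → σ z = z ^ v := by
  have : NeZero n := ⟨hn⟩
  have hσζ : IsPrimitiveRoot (σ ζ) n := hζ.map_of_injective σ.injective
  obtain ⟨v, -, hv, hσv⟩ := (hζ.isPrimitiveRoot_iff).mp hσζ
  refine ⟨v, hv, fun z hz => ?_⟩
  obtain ⟨i, -, rfl⟩ := hζ.eq_pow_of_pow_eq_one hz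
  rw [map_pow, ← hσv, pow_right_comm]

end RootsOfUnity

section RationalRootsOfUnity

variable {L : Type*} [Field L] [Algebra ℚ L] {m n : ℕ} {ζ : L}

lemma exists_gal_forall_apply_eq_pow [IsGalois ℚ L] (hn : n ≠ 0) (hζ : IsPrimitiveRoot ζ n)
    {v : ℕ} (hv : v.Coprime n) : ∃ σ : Gal(L/ℚ), ∀ z : L, z ^ n = 1 → σ z = z ^ v := by
  have : CharZero L := algebraRat.charZero L
  have : NeZero n := ⟨hn⟩
  have h_irr := Polynomial.cyclotomic.irreducible_rat (Nat.pos_of_ne_zero hn)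
  have h_conj : IsConjRoot ℚ (ζ ^ v) ζ := by
    rw [isConjRoot_def, ← hζ.minpoly_eq_cyclotomic_of_irreducible h_irr,
      ← (hζ.pow_of_coprime v hv).minpoly_eq_cyclotomic_of_irreducible h_irr]
  obtain ⟨σ, hσ⟩ := isConjRoot_iff_exists_algEquiv.mp h_conj
  refine ⟨σ, fun z hz => ?_⟩
  obtain ⟨i, -, rfl⟩ := hζ.eq_pow_of_pow_eq_one hz
  rw [map_pow, hσ, pow_right_comm]

lemma exists_mem_fixingRootsOfUnity_inv_mul_mem [IsGalois ℚ L] (hmn : m.Coprime n)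
    (h₀ : m * n ≠ 0) (hζ : IsPrimitiveRoot ζ (m * n)) (τ : Gal(L/ℚ)) :
    ∃ σ ∈ fixingRootsOfUnity ℚ L n, σ⁻¹ * τ ∈ fixingRootsOfUnity ℚ L m := by
  obtain ⟨u, hu, hτ⟩ := exists_forall_apply_eq_pow (left_ne_zero_of_mul h₀)
    (hζ.pow (Nat.pos_of_ne_zero h₀) (mul_comm m n)) τ
  obtain ⟨v, hvm, hvn⟩ := Nat.chineseRemainder hmn u 1
  have hv : v.Coprime (m * n) := Nat.Coprime.mul_right
    (hvm.gcd_eq.trans hu) (hvn.gcd_eq.trans (Nat.gcd_one_left n))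
  obtain ⟨σ, hσ⟩ := exists_gal_forall_apply_eq_pow h₀ hζ hv
  refine ⟨σ, mem_fixingRootsOfUnity.mpr fun z hz => ?_, mem_fixingRootsOfUnity.mpr fun z hz => ?_⟩
  · rw [hσ z (by rw [mul_comm, pow_mul, hz, one_pow]), pow_eq_pow_of_modEq hvn hz, pow_one]
  · rw [AlgEquiv.mul_apply, hτ z hz, ← pow_eq_pow_of_modEq hvm hz,
      ← hσ z (by rw [pow_mul, hz, one_pow])]
    exact σ.symm_apply_apply z

end RationalRootsOfUnity

section SquareFixed

open IntermediateField IsLocalRing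

variable {F L : Type*} [Field F] [Field L] [Algebra F L] {m : ℕ} {x : L}

lemma mem_adjoin_of_forall_fixing [IsGalois F L] [FiniteDimensional F L] {s : Set L}
    (h : ∀ σ : Gal(L/F), (∀ z ∈ s, σ z = z) → σ x = x) : x ∈ adjoin F s := by
  rw [← IsGalois.fixedField_fixingSubgroup (adjoin F s)]
  intro ⟨σ, hσ⟩
  exact h σ fun z hz =>
    (mem_fixingSubgroup_iff _ σ).mp hσ z (subset_adjoin F s hz)

lemma apply_eq_or_eq_neg {σ : Gal(L/F)} (hσ : σ (x ^ 2) = x ^ 2) : σ x = x ∨ σ x = -x := by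
  rwa [← sq_eq_sq_iff_eq_or_eq_neg, ← map_pow]

lemma sq_apply_eq_self {σ : Gal(L/F)} (hσ : σ (x ^ 2) = x ^ 2) : (σ ^ 2) x = x := by
  rw [sq, AlgEquiv.mul_apply]
  rcases apply_eq_or_eq_neg hσ with h | h <;> simp only [h, map_neg, neg_neg]

open scoped IsMulCommutative in
lemma apply_div_mem_adjoin [IsAbelianGalois F L] [FiniteDimensional F L]
    (hx : ∀ σ ∈ fixingRootsOfUnity F L m, σ (x ^ 2) = x ^ 2) (τ : Gal(L/F)) :
    τ x / x ∈ adjoin F {z : L | z ^ m = 1} := by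
  refine mem_adjoin_of_forall_fixing fun σ hσ => ?_
  have h_comm : σ (τ x) = τ (σ x) := DFunLike.congr_fun (mul_comm σ τ) x
  rw [map_div₀, h_comm]
  rcases apply_eq_or_eq_neg (hx σ (mem_fixingRootsOfUnity.mpr hσ)) with h | h
  · rw [h]
  · rw [h, map_neg, neg_div_neg_eq]

lemma prod_range_pow_apply_mul {σ : Gal(L/F)} {z : L} (h : z * x = σ x) (n : ℕ) :
    (∏ i ∈ Finset.range n, (σ ^ i) z) * x = (σ ^ n) x := by
  induction n with
  | zero => rw [Finset.prod_range_zero, one_mul, pow_zero, AlgEquiv.one_apply]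
  | succ n ih => rw [Finset.prod_range_succ, mul_right_comm, ih, mul_comm, ← map_mul, h, pow_succ,
      AlgEquiv.mul_apply]

open scoped IsMulCommutative in
lemma pow_apply_ne_neg [IsAbelianGalois F L] [FiniteDimensional F L] {K : IntermediateField F L}
    (A : ValuationSubring K) {p : ℕ} [CharP (ResidueField A) p] (hp : p.Prime) (hp₂ : p ≠ 2)
    {t φ : Gal(L/F)} (ht : ActsAsPow A (t.restrictNormal K) 1)
    (hφ : ActsAsPow A (φ.restrictNormal K) p) (hx₀ : x ≠ 0) (hx : x ^ 2 ∈ K) (htx : t x / x ∈ K)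
    (hφx : φ x / x ∈ K) {r : ℕ} (hr : p - 1 ∣ r) : (t ^ r) x ≠ -x := by
  intro h_neg
  have h_coe : ∀ (σ : Gal(L/F)) (y : K), (σ.restrictNormal K y : L) = σ y :=
    fun σ y => σ.restrictNormal_commutes K y
  have h_sq : ∀ (σ : Gal(L/F)) (hσ : σ x / x ∈ K),
      (⟨σ x / x, hσ⟩ : K) ^ 2 * ⟨x ^ 2, hx⟩ = σ.restrictNormal K ⟨x ^ 2, hx⟩ := fun σ hσ =>
    Subtype.ext <| (h_coe σ _).symm ▸ by
      change (σ x / x) ^ 2 * x ^ 2 = σ (x ^ 2)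
      rw [← mul_pow, div_mul_cancel₀ _ hx₀, map_pow]
  refine ht.prod_range_pow_apply_ne_neg_one hp hp₂ hφ (isOfFinOrder_of_finite _)
    (isOfFinOrder_of_finite _) (α := ⟨x ^ 2, hx⟩)
    (fun h => hx₀ (pow_eq_zero_iff two_ne_zero |>.mp (congrArg Subtype.val h)))
    (h_sq t htx) (h_sq φ hφx) ?_ hr ?_
  · have h_comm : t (φ x) = φ (t x) := DFunLike.congr_fun (mul_comm t φ) x
    have htx₀ : t x ≠ 0 := (map_ne_zero t).mpr hx₀
    have hφx₀ : φ x ≠ 0 := (map_ne_zero φ).mpr hx₀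
    refine Subtype.ext ?_
    change (t.restrictNormal K ⟨φ x / x, hφx⟩ : L) * (t x / x) =
      φ.restrictNormal K ⟨t x / x, htx⟩ * (φ x / x)
    rw [h_coe, h_coe, map_div₀, map_div₀, h_comm, div_mul_div_cancel₀ htx₀,
      div_mul_div_cancel₀ hφx₀]
  · have h_pow : ∀ i : ℕ, (t.restrictNormal K) ^ i = (t ^ i).restrictNormal K :=
      fun i => (map_pow (AlgEquiv.restrictNormalHom K) t i).symm
    refine Subtype.ext (mul_right_cancel₀ hx₀ ?_)
    rw [SubmonoidClass.coe_finsetProd]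
    simp only [h_pow, h_coe]
    rw [prod_range_pow_apply_mul (div_mul_cancel₀ _ hx₀), h_neg]
    exact (neg_one_mul x).symm

lemma restrictNormal_apply_eq_pow {K : IntermediateField F L} [Normal F K] {σ : Gal(L/F)} {n v : ℕ}
    (h : ∀ z : L, z ^ n = 1 → σ z = z ^ v) (z : K) (hz : z ^ n = 1) :
    σ.restrictNormal K z = z ^ v :=
  Subtype.ext <| (σ.restrictNormal_commutes K z).trans <|
    h z (congrArg Subtype.val hz)

variable (F) in
lemma isCyclotomicExtension_adjoin_setOf_pow_eq_one {n : ℕ} (hn : n ≠ 0) {ζ : L}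
    (hζ : IsPrimitiveRoot ζ n) :
    IsCyclotomicExtension {n} F (adjoin F {z : L | z ^ n = 1}) := by
  have h := isCyclotomicExtension_adjoin_of_exists_isPrimitiveRoot {n} F L
    fun m hm _ => ⟨ζ, hm ▸ hζ⟩
  have h_set : {z : L | ∃ m ∈ ({n} : Set ℕ), m ≠ 0 ∧ z ^ m = 1} = {z : L | z ^ n = 1} := by
    simp only [Set.mem_singleton_iff, exists_eq_left, ne_eq, hn, not_false_eq_true, true_and]
  rwa [h_set] at h

end SquareFixed

section CyclotomicCharacter

variable {F L : Type*} [Field F] [Field L] [Algebra F L] {n : ℕ} {ζ : L}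

lemma mem_fixingRootsOfUnity_iff_apply_eq [NeZero n] (hζ : IsPrimitiveRoot ζ n) {σ : Gal(L/F)} :
    σ ∈ fixingRootsOfUnity F L n ↔ σ ζ = ζ := by
  refine mem_fixingRootsOfUnity.trans ⟨fun h => h ζ hζ.pow_eq_one, fun h z hz => ?_⟩
  obtain ⟨i, -, rfl⟩ := hζ.eq_pow_of_pow_eq_one hz
  rw [map_pow, h]

lemma autToPow_eq_one_iff [NeZero n] (hζ : IsPrimitiveRoot ζ n) {σ : Gal(L/F)} :
    hζ.autToPow F σ = 1 ↔ σ ∈ fixingRootsOfUnity F L n := by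
  rw [mem_fixingRootsOfUnity_iff_apply_eq hζ, ← map_one (hζ.autToPow F), Units.ext_iff,
    ← (ZMod.val_injective n).eq_iff]
  refine ⟨fun h => ?_, fun h => hζ.pow_inj (ZMod.val_lt _) (ZMod.val_lt _) ?_⟩
  · rw [← hζ.autToPow_spec F σ, h, hζ.autToPow_spec F, AlgEquiv.one_apply]
  · rw [hζ.autToPow_spec F, hζ.autToPow_spec F, h, AlgEquiv.one_apply]

end CyclotomicCharacter

section Generator

variable {L : Type*} [Field L] [Algebra ℚ L] [IsGalois ℚ L] {n : ℕ} {ζ : L}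

lemma autToPow_surjective [NeZero n] (hζ : IsPrimitiveRoot ζ n) :
    Function.Surjective (hζ.autToPow ℚ) := fun u => by
  obtain ⟨σ, hσ⟩ := exists_gal_forall_apply_eq_pow (NeZero.ne n) hζ (ZMod.val_coe_unit_coprime u)
  refine ⟨σ, Units.ext <| ZMod.val_injective n <|
    hζ.pow_inj (ZMod.val_lt _) (ZMod.val_lt _) ?_⟩
  rw [hζ.autToPow_spec ℚ σ, hσ ζ hζ.pow_eq_one]

lemma exists_generator_mem_fixingRootsOfUnity {p k e : ℕ} [hp : Fact p.Prime]
    (hp₂ : p ≠ 2) (hk : k ≠ 0) (hpe : p.Coprime e) (he : e ≠ 0)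
    (hζ : IsPrimitiveRoot ζ (p ^ k * e)) :
    ∃ t ∈ fixingRootsOfUnity ℚ L e,
      (∀ τ : Gal(L/ℚ), ∃ i : ℕ, (t ^ i)⁻¹ * τ ∈ fixingRootsOfUnity ℚ L (p ^ k)) ∧
        ∀ n : ℕ, t ^ n ∈ fixingRootsOfUnity ℚ L (p ^ k) → p - 1 ∣ n := by
  have : NeZero (p ^ k) := ⟨pow_ne_zero k hp.out.ne_zero⟩
  have h₀ : p ^ k * e ≠ 0 := mul_ne_zero (NeZero.ne _) he
  have hω := hζ.pow (Nat.pos_of_ne_zero h₀) (mul_comm (p ^ k) e)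
  have : IsCyclic (ZMod (p ^ k))ˣ := ZMod.isCyclic_units_of_prime_pow p hp.out hp₂ k
  obtain ⟨u, hu⟩ := IsCyclic.exists_generator (α := (ZMod (p ^ k))ˣ)
  obtain ⟨σ, hσ⟩ := autToPow_surjective hω u
  obtain ⟨t, ht, htσ⟩ := exists_mem_fixingRootsOfUnity_inv_mul_mem (hpe.pow_left k) h₀ hζ σ
  have htu : hω.autToPow ℚ t = u := by
    rw [← hσ, ← inv_mul_eq_one, ← map_inv, ← map_mul, autToPow_eq_one_iff]
    exact htσ
  refine ⟨t, ht, fun τ => ?_, fun n hn => ?_⟩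
  · obtain ⟨i, hi⟩ := mem_powers_iff_mem_zpowers.mpr (hu (hω.autToPow ℚ τ))
    refine ⟨i, (autToPow_eq_one_iff hω).mp ?_⟩
    rw [map_mul, map_inv, map_pow, htu, inv_mul_eq_one]
    exact hi
  · rw [← autToPow_eq_one_iff hω, map_pow, htu] at hn
    have h_ord := orderOf_dvd_of_pow_eq_one hn
    rw [orderOf_eq_card_of_forall_mem_zpowers hu, Nat.card_eq_fintype_card,
      ZMod.card_units_eq_totient, Nat.totient_prime_pow hp.out (Nat.pos_of_ne_zero hk)] at h_ord
    exact (dvd_mul_left _ _).trans h_ord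

end Generator

section AbelianOverRat

variable {L : Type*} [Field L] [Algebra ℚ L] [IsAbelianGalois ℚ L] [FiniteDimensional ℚ L] {x : L}

-- `t` is inertial at `p`, and `φ` is a Frobenius element at `p`.
theorem pow_apply_eq_self_of_sub_one_dvd {p k e : ℕ} [hp : Fact p.Prime] (hp₂ : p ≠ 2)
    (hpe : p.Coprime e) (he : e ≠ 0) {ζ : L} (hζ : IsPrimitiveRoot ζ (p ^ k * e))
    (hx : ∀ σ ∈ fixingRootsOfUnity ℚ L (p ^ k * e), σ (x ^ 2) = x ^ 2)
    {t : Gal(L/ℚ)} (ht : t ∈ fixingRootsOfUnity ℚ L e) {r : ℕ} (hr : p - 1 ∣ r)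
    (htr : t ^ r ∈ fixingRootsOfUnity ℚ L (p ^ k * e)) : (t ^ r) x = x := by
  rcases eq_or_ne x 0 with rfl | hx₀
  · exact map_zero _
  refine (apply_eq_or_eq_neg (hx _ htr)).resolve_right ?_
  have h₀ : p ^ k * e ≠ 0 := mul_ne_zero (pow_ne_zero k hp.out.ne_zero) he
  have : NeZero (p ^ k * e) := ⟨h₀⟩
  have : CharZero L := algebraRat.charZero L
  obtain ⟨φ, hφ⟩ := exists_gal_forall_apply_eq_pow he (hζ.pow (Nat.pos_of_ne_zero h₀) rfl) hpe
  let K := IntermediateField.adjoin ℚ {z : L | z ^ (p ^ k * e) = 1}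
  obtain ⟨A, hA⟩ := exists_valuationSubring_charP_residueField K hp.out
  have := isCyclotomicExtension_adjoin_setOf_pow_eq_one ℚ h₀ hζ
  have hx_mem : x ^ 2 ∈ K :=
    mem_adjoin_of_forall_fixing fun σ hσ => hx σ (mem_fixingRootsOfUnity.mpr hσ)
  refine pow_apply_ne_neg A hp.out hp₂ (φ := φ) ?_ ?_ hx₀ hx_mem
    (apply_div_mem_adjoin hx t) (apply_div_mem_adjoin hx φ) hr
  · refine pow_zero p ▸ actsAsPow_of_forall_pow_eq_one (inst := K.algebra') A (k := k) (e := e)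
      (restrictNormal_apply_eq_pow fun z hz => ?_)
    rw [pow_zero, pow_one, mem_fixingRootsOfUnity.mp ht z hz]
  · exact pow_one p ▸ actsAsPow_of_forall_pow_eq_one (inst := K.algebra') A (k := k) (e := e)
      (restrictNormal_apply_eq_pow ((pow_one p).symm ▸ hφ))

open scoped IsMulCommutative in
lemma sq_apply_eq_self_of_sq_mem_of_prime_pow {p k e : ℕ} [hp : Fact p.Prime] (hp₂ : p ≠ 2)
    (hk : k ≠ 0) (hpe : p.Coprime e) (he : e ≠ 0) {ζ : L} (hζ : IsPrimitiveRoot ζ (p ^ k * e))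
    (hx : ∀ σ ∈ fixingRootsOfUnity ℚ L (p ^ k * e), σ (x ^ 2) = x ^ 2) {τ : Gal(L/ℚ)}
    (hτ : τ ∈ fixingRootsOfUnity ℚ L e) (hτ₂ : τ ^ 2 ∈ fixingRootsOfUnity ℚ L (p ^ k * e)) :
    (τ ^ 2) x = x := by
  have h_inf := fixingRootsOfUnity_mul (F := ℚ) (L := L) (hpe.pow_left k)
  obtain ⟨t, ht, h_gen, h_dvd⟩ := exists_generator_mem_fixingRootsOfUnity hp₂ hk hpe he hζ
  obtain ⟨i, hi⟩ := h_gen τ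
  have hκ : (t ^ i)⁻¹ * τ ∈ fixingRootsOfUnity ℚ L (p ^ k * e) := by
    rw [h_inf]
    exact Subgroup.mem_inf.mpr ⟨hi, mul_mem (inv_mem (pow_mem ht i)) hτ⟩
  have h_sq : τ ^ 2 = t ^ (i * 2) * ((t ^ i)⁻¹ * τ) ^ 2 := by
    rw [pow_mul, ← mul_pow, mul_inv_cancel_left]
  have ht₂ : t ^ (i * 2) ∈ fixingRootsOfUnity ℚ L (p ^ k * e) :=
    (mul_mem_cancel_right (pow_mem hκ 2)).mp (h_sq ▸ hτ₂)
  rw [h_sq, AlgEquiv.mul_apply, sq_apply_eq_self (hx _ hκ)]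
  exact pow_apply_eq_self_of_sub_one_dvd hp₂ hpe he hζ hx ht
    (h_dvd _ (fixingRootsOfUnity_anti (dvd_mul_right _ e) ht₂)) ht₂

open scoped IsMulCommutative in
theorem sq_apply_eq_self_of_sq_mem {d e : ℕ} (hd : Odd d) (hde : d.Coprime e) (he : e ≠ 0) {ζ : L}
    (hζ : IsPrimitiveRoot ζ (d * e))
    (hx : ∀ σ ∈ fixingRootsOfUnity ℚ L (d * e), σ (x ^ 2) = x ^ 2) {τ : Gal(L/ℚ)}
    (hτ : τ ∈ fixingRootsOfUnity ℚ L e) (hτ₂ : τ ^ 2 ∈ fixingRootsOfUnity ℚ L (d * e)) :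
    (τ ^ 2) x = x := by
  induction d using Nat.recOnPosPrimePosCoprime generalizing e τ with
  | prime_pow p k hp hk =>
    have : Fact p.Prime := ⟨hp⟩
    have hp₂ : p ≠ 2 := by
      rintro rfl
      exact Nat.not_even_iff_odd.mpr hd ((even_two).pow_of_ne_zero hk.ne')
    exact sq_apply_eq_self_of_sq_mem_of_prime_pow hp₂ hk.ne'
      (Nat.Coprime.coprime_dvd_left (dvd_pow_self p hk.ne') hde) he hζ hx hτ hτ₂
  | zero => exact absurd hd (by decide)
  | one => exact sq_apply_eq_self (hx τ ((one_mul e).symm ▸ hτ))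
  | coprime a b ha hb hab iha ihb =>
    obtain ⟨ha_odd, hb_odd⟩ := Nat.odd_mul.mp hd
    have hae : a.Coprime e := hde.coprime_mul_right
    have hbe : b.Coprime e := hde.coprime_mul_left
    have h_abe : a * b * e = a * (b * e) := mul_assoc a b e
    have h_bae : a * b * e = b * (a * e) := by rw [mul_comm a b, mul_assoc]
    have h₀ : a * (b * e) ≠ 0 := by positivity
    obtain ⟨s, hs, hsτ⟩ := exists_mem_fixingRootsOfUnity_inv_mul_mem
      (hab.mul_right hae) h₀ (h_abe ▸ hζ) τ
    have hτ_eq : τ ^ 2 = s ^ 2 * (s⁻¹ * τ) ^ 2 := by rw [← mul_pow, mul_inv_cancel_left]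
    have hs_sq : s ^ 2 ∈ fixingRootsOfUnity ℚ L (a * b * e) := by
      rw [h_abe, fixingRootsOfUnity_mul (hab.mul_right hae)]
      exact Subgroup.mem_inf.mpr ⟨(mul_mem_cancel_right (pow_mem hsτ 2)).mp
        (hτ_eq ▸ fixingRootsOfUnity_anti ⟨b * e, h_abe⟩ hτ₂), pow_mem hs 2⟩
    have hsτ' : s⁻¹ * τ ∈ fixingRootsOfUnity ℚ L (a * e) := by
      rw [fixingRootsOfUnity_mul hae]
      exact Subgroup.mem_inf.mpr ⟨hsτ,
        mul_mem (inv_mem (fixingRootsOfUnity_anti (dvd_mul_left e b) hs)) hτ⟩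
    have hsτ_sq : (s⁻¹ * τ) ^ 2 ∈ fixingRootsOfUnity ℚ L (a * b * e) :=
      (mul_mem_cancel_left hs_sq).mp (hτ_eq ▸ hτ₂)
    rw [h_abe] at hs_sq
    rw [h_bae] at hsτ_sq
    rw [hτ_eq, AlgEquiv.mul_apply,
      ihb hb_odd (hab.symm.mul_right hbe) (by positivity) (h_bae ▸ hζ) (h_bae ▸ hx) hsτ' hsτ_sq,
      iha ha_odd (hab.mul_right hae) (by positivity) (h_abe ▸ hζ) (h_abe ▸ hx) hs hs_sq]

end AbelianOverRat

lemma modEq_one_or_dvd_add_one_of_sq_modEq_one {v n : ℕ} (h : v ^ 2 ≡ 1 [MOD 2 ^ (n + 1)]) :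
    v ≡ 1 [MOD 2 ^ n] ∨ 2 ^ n ∣ v + 1 := by
  have h_odd : Odd v := by
    have h₂ : v ^ 2 % 2 = 1 := h.of_dvd (dvd_pow_self 2 n.succ_ne_zero)
    exact Nat.Odd.of_mul_left (sq v ▸ Nat.odd_iff.mpr h₂)
  obtain ⟨u, rfl⟩ := h_odd
  obtain - | k := n
  · exact .inl (Nat.modEq_one)
  have h_dvd : 2 ^ k ∣ u * (u + 1) := by
    have h_dvd' := (Nat.modEq_iff_dvd' (Nat.one_le_pow _ _ (by omega))).mp h.symm
    rw [show (2 * u + 1) ^ 2 - 1 = 4 * (u * (u + 1)) by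
      rw [Nat.sub_eq_iff_eq_add (Nat.one_le_pow _ _ (by omega))]; ring,
      show 2 ^ (k + 1 + 1) = 4 * 2 ^ k by ring] at h_dvd'
    exact Nat.dvd_of_mul_dvd_mul_left four_pos h_dvd'
  have h_cases : 2 ^ k ∣ u ∨ 2 ^ k ∣ u + 1 := by
    rcases u.even_or_odd with hu | hu
    · exact .inl <|
        (Nat.Coprime.pow_left k (Nat.coprime_two_left.mpr hu.add_one)).dvd_of_dvd_mul_right h_dvd
    · exact .inr <| (Nat.Coprime.pow_left k (Nat.coprime_two_left.mpr hu)).dvd_of_dvd_mul_left h_dvd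
  refine h_cases.imp (fun hu => ?_) fun hu => ?_
  · rw [Nat.ModEq.comm, Nat.modEq_iff_dvd' (by omega), Nat.add_sub_cancel, pow_succ']
    exact mul_dvd_mul_left 2 hu
  · rw [pow_succ', show 2 * u + 1 + 1 = 2 * (u + 1) by ring]
    exact mul_dvd_mul_left 2 hu

section ConjugationAtTwo

variable {L : Type*} [Field L] [Algebra ℚ L] {m n : ℕ} {ζ x : L}

lemma mem_or_mul_mem_fixingRootsOfUnity_two_pow
    (hζ : IsPrimitiveRoot ζ (2 ^ (n + 1))) {c τ : Gal(L/ℚ)}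
    (hc : ∀ z : L, z ^ 2 ^ n = 1 → c z = z⁻¹)
    (hτ : τ ^ 2 ∈ fixingRootsOfUnity ℚ L (2 ^ (n + 1))) :
    τ ∈ fixingRootsOfUnity ℚ L (2 ^ n) ∨ c * τ ∈ fixingRootsOfUnity ℚ L (2 ^ n) := by
  obtain ⟨v, -, hv⟩ := exists_forall_apply_eq_pow (by positivity) hζ τ
  have hv' (z : L) (hz : z ^ 2 ^ n = 1) : τ z = z ^ v :=
    hv z (by rw [pow_succ, pow_mul, hz, one_pow])
  have h_sq : v ^ 2 ≡ 1 [MOD 2 ^ (n + 1)] := by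
    have h := mem_fixingRootsOfUnity.mp hτ ζ hζ.pow_eq_one
    rw [sq, AlgEquiv.mul_apply, hv ζ hζ.pow_eq_one, map_pow, hv ζ hζ.pow_eq_one, ← pow_mul, ← sq]
      at h
    rw [hζ.eq_orderOf]
    exact (hζ.isOfFinOrder (NeZero.ne _)).pow_eq_pow_iff_modEq.mp (h.trans (pow_one ζ).symm)
  refine (modEq_one_or_dvd_add_one_of_sq_modEq_one h_sq).imp (fun h => ?_) fun h => ?_ <;>
    refine mem_fixingRootsOfUnity.mpr fun z hz => ?_
  · rw [hv' z hz, pow_eq_pow_of_modEq h hz, pow_one]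
  · rw [AlgEquiv.mul_apply, hv' z hz, map_pow, hc z hz, inv_pow, inv_eq_iff_eq_inv]
    refine eq_inv_of_mul_eq_one_left ?_
    rw [← pow_succ, ← orderOf_dvd_iff_pow_eq_one]
    exact (orderOf_dvd_of_pow_eq_one hz).trans h

open scoped IsMulCommutative in
theorem sq_apply_eq_self_of_sq_mem_of_conj [IsAbelianGalois ℚ L] [FiniteDimensional ℚ L]
    (hm : m ≠ 0) (hζ : IsPrimitiveRoot ζ (2 * m)) {c : Gal(L/ℚ)}
    (hc : ∀ z : L, z ^ m = 1 → c z = z⁻¹) (hc₂ : c ^ 2 = 1)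
    (hx : ∀ σ ∈ fixingRootsOfUnity ℚ L m, σ (x ^ 2) = x ^ 2)
    {τ : Gal(L/ℚ)} (hτ : τ ^ 2 ∈ fixingRootsOfUnity ℚ L (2 * m)) : (τ ^ 2) x = x := by
  obtain ⟨n, e, he, rfl⟩ := Nat.exists_eq_two_pow_mul_odd hm
  have h_dvd : 2 ^ n * e ∣ 2 * (2 ^ n * e) := dvd_mul_left _ 2
  have hm_pos : 0 < 2 * (2 ^ n * e) := by positivity
  rw [mul_comm _ e] at hx
  have hτ' : τ ^ 2 ∈ fixingRootsOfUnity ℚ L (e * 2 ^ n) :=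
    fixingRootsOfUnity_anti (mul_comm e _ ▸ h_dvd) hτ
  have hζ' : IsPrimitiveRoot (ζ ^ 2) (e * 2 ^ n) := hζ.pow hm_pos (by ring)
  have h_cop : e.Coprime (2 ^ n) := (Nat.coprime_two_right.mpr he).pow_right n
  have hζ_two : IsPrimitiveRoot (ζ ^ e) (2 ^ (n + 1)) := hζ.pow hm_pos (by ring)
  rcases mem_or_mul_mem_fixingRootsOfUnity_two_pow hζ_two
    (fun z hz => hc z (by rw [pow_mul, hz, one_pow]))
    (fixingRootsOfUnity_anti ⟨e, by ring⟩ hτ) with h | h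
  · exact sq_apply_eq_self_of_sq_mem he h_cop (by positivity) hζ' hx h hτ'
  · have h_sq : (c * τ) ^ 2 = τ ^ 2 := by rw [mul_pow, hc₂, one_mul]
    rw [← h_sq] at hτ' ⊢
    exact sq_apply_eq_self_of_sq_mem he h_cop (by positivity) hζ' hx h hτ'

theorem mem_adjoin_rootsOfUnity_union_sqrt [IsAbelianGalois ℚ L] [FiniteDimensional ℚ L]
    (hm : m ≠ 0) (hζ : IsPrimitiveRoot ζ (2 * m)) {c : Gal(L/ℚ)}
    (hc : ∀ z : L, z ^ m = 1 → c z = z⁻¹) (hc₂ : c ^ 2 = 1)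
    (hx : ∀ σ ∈ fixingRootsOfUnity ℚ L m, σ (x ^ 2) = x ^ 2) :
    x ∈ IntermediateField.adjoin ℚ
      ({z : L | z ^ (2 * m) = 1} ∪ {w : L | w ^ 2 ∈ (⊥ : IntermediateField ℚ L)}) := by
  refine mem_adjoin_of_forall_fixing fun σ hσ => ?_
  obtain ⟨τ, rfl⟩ : IsSquare σ := by
    have : CharZero L := algebraRat.charZero L
    by_contra h
    obtain ⟨w, hw₀, hw, hσw⟩ := exists_sq_mem_bot_apply_eq_neg
      (by rw [ringChar.eq_zero]; decide) h
    rw [hσ w (.inr hw)] at hσw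
    exact hw₀ (self_eq_neg.mp hσw)
  rw [← sq] at hσ ⊢
  exact sq_apply_eq_self_of_sq_mem_of_conj hm hζ hc hc₂ hx
    (mem_fixingRootsOfUnity.mpr fun z hz => hσ z (.inl hz))

end ConjugationAtTwo

section SquareRoots

variable {Ω : Type*} [Field Ω] {K : Subfield Ω} {x y : Ω}

lemma mem_subfield_of_sq_eq_sq (h : x ^ 2 = y ^ 2) (hy : y ∈ K) : x ∈ K := by
  rcases sq_eq_sq_iff_eq_or_eq_neg.mp h with rfl | rfl
  · exact hy
  · exact neg_mem hy

variable (hK : ∀ n ≠ 0, ∀ z : Ω, z ^ n = 1 → z ∈ K)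
include hK

lemma gaussSum_mem_subfield_of_isQuadratic {n : ℕ} [NeZero n] {χ : MulChar (ZMod n) Ω}
    (hχ : χ.IsQuadratic) (ψ : AddChar (ZMod n) Ω) : gaussSum χ ψ ∈ K := by
  refine sum_mem fun a _ => mul_mem ?_ (hK n (NeZero.ne n) _ ?_)
  · rcases hχ a with h | h | h <;> rw [h]
    exacts [zero_mem K, one_mem K, neg_mem (one_mem K)]
  · rw [← AddChar.map_nsmul_eq_pow, nsmul_eq_mul, CharP.cast_eq_zero, zero_mul,
      AddChar.map_zero_eq_one]

variable [IsAlgClosed Ω]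

lemma mem_subfield_of_sq_eq_neg_sq (h : x ^ 2 = -y ^ 2) (hy : y ∈ K) : x ∈ K := by
  obtain ⟨i, hi⟩ := IsAlgClosed.exists_pow_nat_eq (-1 : Ω) two_pos
  have hi_mem : i ∈ K := hK 4 (by decide) i (by rw [pow_mul i 2 2, hi, neg_one_sq])
  exact mem_subfield_of_sq_eq_sq (y := i * y) (by rw [h, mul_pow, hi, neg_one_mul])
    (mul_mem hi_mem hy)

variable [CharZero Ω]

lemma mem_subfield_of_sq_eq_two (h : x ^ 2 = 2) : x ∈ K := by
  obtain ⟨ζ, hζ⟩ := IsAlgClosed.exists_pow_nat_eq (-1 : Ω) four_pos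
  have hζ_mem : ζ ∈ K := hK 8 (by decide) ζ (by rw [pow_mul ζ 4 2, hζ, neg_one_sq])
  have hζ₀ : ζ ≠ 0 := by
    rintro rfl
    norm_num at hζ
  refine mem_subfield_of_sq_eq_sq (y := ζ + ζ⁻¹) ?_ (add_mem hζ_mem (inv_mem hζ_mem))
  rw [h]
  field_simp
  linear_combination -hζ

lemma mem_subfield_of_sq_eq_prime {p : ℕ} (hp : p.Prime) (h : x ^ 2 = p) : x ∈ K := by
  rcases eq_or_ne p 2 with rfl | hp₂
  · exact mem_subfield_of_sq_eq_two hK (by rw [h, Nat.cast_two])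
  have : Fact p.Prime := ⟨hp⟩
  obtain ⟨ζ, hζ⟩ := HasEnoughRootsOfUnity.exists_primitiveRoot Ω p
  let χ : MulChar (ZMod p) Ω := (quadraticChar (ZMod p)).ringHomComp (Int.castRingHom Ω)
  have hχ_quad : χ.IsQuadratic := (quadraticChar_isQuadratic (ZMod p)).comp _
  have hχ_ne : χ ≠ 1 := (MulChar.ringHomComp_ne_one_iff (RingHom.injective_int _)).mpr
    (quadraticChar_ne_one (by rwa [ZMod.ringChar_zmod_n]))
  have h_gauss := gaussSum_sq hχ_ne hχ_quad (AddChar.zmodChar_primitive_of_primitive_root p hζ)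
  have h_mem := gaussSum_mem_subfield_of_isQuadratic hK hχ_quad (AddChar.zmodChar p hζ.pow_eq_one)
  rw [ZMod.card, ← h] at h_gauss
  rcases hχ_quad (-1) with hχ | hχ | hχ <;> rw [hχ] at h_gauss
  · exact absurd hχ (IsUnit.map χ isUnit_one.neg).ne_zero
  · exact mem_subfield_of_sq_eq_sq (h_gauss.trans (one_mul _)).symm h_mem
  · exact mem_subfield_of_sq_eq_neg_sq hK (by rw [h_gauss, neg_one_mul, neg_neg]) h_mem

lemma mem_subfield_of_sq_eq_natCast {n : ℕ} (h : x ^ 2 = n) : x ∈ K := by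
  induction n using Nat.recOnMul generalizing x with
  | zero => rw [pow_eq_zero_iff two_ne_zero |>.mp (h.trans Nat.cast_zero)]; exact zero_mem K
  | one => exact mem_subfield_of_sq_eq_sq (y := 1) (by rw [h, Nat.cast_one, one_pow]) (one_mem K)
  | prime p hp => exact mem_subfield_of_sq_eq_prime hK hp h
  | mul a b ha hb =>
    obtain ⟨u, hu⟩ := IsAlgClosed.exists_pow_nat_eq (a : Ω) two_pos
    obtain ⟨v, hv⟩ := IsAlgClosed.exists_pow_nat_eq (b : Ω) two_pos
    exact mem_subfield_of_sq_eq_sq (by rw [h, mul_pow, hu, hv, Nat.cast_mul])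
      (mul_mem (ha hu) (hb hv))

theorem mem_subfield_of_sq_eq_ratCast {q : ℚ} (h : x ^ 2 = q) : x ∈ K := by
  have h_den : (q.den : Ω) ≠ 0 := Nat.cast_ne_zero.mpr q.den_ne_zero
  obtain ⟨y, hy⟩ := IsAlgClosed.exists_pow_nat_eq ((q.num.natAbs * q.den : ℕ) : Ω) two_pos
  have hy_mem : y / q.den ∈ K := div_mem (mem_subfield_of_sq_eq_natCast hK hy) (natCast_mem K _)
  have h_sq : (y / q.den) ^ 2 = q.num.natAbs / q.den := by
    rw [div_pow, hy, Nat.cast_mul, sq, mul_div_mul_right _ _ h_den]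
  rw [Rat.cast_def] at h
  rcases q.num.natAbs_eq with h_num | h_num <;> rw [h_num] at h
  · exact mem_subfield_of_sq_eq_sq (by rw [h, h_sq, Int.cast_natCast]) hy_mem
  · exact mem_subfield_of_sq_eq_neg_sq hK
      (by rw [h, h_sq, Int.cast_neg, Int.cast_natCast, neg_div]) hy_mem

end SquareRoots

section CyclotomicClosure

/-- The `n`-th cyclotomic field `ℚ(e^{2πi/n})` as a subfield of `ℂ`; it is `ℚ` for `n = 0`. -/
noncomputable def cyclotomicSubfield (n : ℕ) : IntermediateField ℚ ℂ :=
  IntermediateField.adjoin ℚ {exp (2 * (Real.pi : ℂ) * I / (n : ℂ))}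

/-- The field of all cyclotomic numbers, the union of the fields `ℚ(e^{2πi/n})` for `n ≥ 1`. -/
noncomputable def cyclotomicClosure : IntermediateField ℚ ℂ := ⨆ n : ℕ+, cyclotomicSubfield n

lemma mem_cyclotomicSubfield_of_pow_eq_one {n : ℕ} (hn : n ≠ 0) {z : ℂ} (hz : z ^ n = 1) :
    z ∈ cyclotomicSubfield n := by
  have : NeZero n := ⟨hn⟩
  obtain ⟨i, -, rfl⟩ := (isPrimitiveRoot_exp n hn).eq_pow_of_pow_eq_one hz
  exact pow_mem (IntermediateField.mem_adjoin_simple_self ℚ _) i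

lemma mem_cyclotomicClosure_of_pow_eq_one {n : ℕ} (hn : n ≠ 0) {z : ℂ} (hz : z ^ n = 1) :
    z ∈ cyclotomicClosure :=
  (le_iSup (fun n : ℕ+ => cyclotomicSubfield n) ⟨n, Nat.pos_of_ne_zero hn⟩)
    (mem_cyclotomicSubfield_of_pow_eq_one hn hz)

lemma cyclotomicSubfield_le_of_dvd {m n : ℕ} (hn : n ≠ 0) (h : m ∣ n) :
    cyclotomicSubfield m ≤ cyclotomicSubfield n := by
  refine IntermediateField.adjoin_simple_le_iff.mpr
    (mem_cyclotomicSubfield_of_pow_eq_one hn (orderOf_dvd_iff_pow_eq_one.mp ?_))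
  rwa [← (isPrimitiveRoot_exp m (ne_zero_of_dvd_ne_zero hn h)).eq_orderOf]

lemma exists_forall_mem_cyclotomicSubfield {ι : Type*} [Finite ι] {x : ι → ℂ}
    (hx : ∀ i, x i ∈ cyclotomicClosure) : ∃ n, 0 < n ∧ ∀ i, x i ∈ cyclotomicSubfield n := by
  have h_dir : Directed (· ≤ ·) fun n : ℕ+ => cyclotomicSubfield n := fun m n =>
    ⟨m * n, cyclotomicSubfield_le_of_dvd (m * n).ne_zero (dvd_mul_right _ _),
      cyclotomicSubfield_le_of_dvd (m * n).ne_zero (dvd_mul_left _ _)⟩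
  have h_mem : ∀ i, ∃ n : ℕ+, x i ∈ cyclotomicSubfield n := fun i => by
    simpa only [cyclotomicClosure, ← SetLike.mem_coe,
      IntermediateField.coe_iSup_of_directed h_dir, Set.mem_iUnion] using hx i
  choose n hn using h_mem
  obtain ⟨N, hN⟩ := h_dir.finite_le n
  exact ⟨N, N.pos, fun i => hN i (hn i)⟩

variable {L : Type*} [Field L] [Algebra ℚ L] [Algebra L ℂ]

lemma exists_restrict_conj [IsGalois ℚ L] : ∃ c : Gal(L/ℚ), c ^ 2 = 1 ∧
    ∀ m ≠ 0, ∀ z : L, z ^ m = 1 → c z = z⁻¹ := by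
  let κ : Gal(ℂ/ℚ) := conjAe.restrictScalars ℚ
  refine ⟨AlgEquiv.restrictNormalHom L κ, ?_, fun m hm z hz => ?_⟩
  · rw [← map_pow, show κ ^ 2 = 1 from AlgEquiv.ext conj_conj, map_one]
  · have hz' : (algebraMap L ℂ z) ^ m = 1 := by rw [← map_pow, hz, map_one]
    refine (algebraMap L ℂ).injective ((κ.restrictNormal_commutes L z).trans ?_)
    rw [map_inv₀]
    exact (inv_eq_conj (norm_eq_one_of_pow_eq_one hz' hm)).symm

theorem algebraMap_mem_cyclotomicClosure [IsAbelianGalois ℚ L] [FiniteDimensional ℚ L] {m : ℕ}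
    (hm : m ≠ 0) {ζ x : L} (hζ : IsPrimitiveRoot ζ (2 * m))
    (hx : ∀ σ ∈ fixingRootsOfUnity ℚ L m, σ (x ^ 2) = x ^ 2) :
    algebraMap L ℂ x ∈ cyclotomicClosure := by
  obtain ⟨c, hc₂, hc⟩ := exists_restrict_conj (L := L)
  suffices h : IntermediateField.adjoin ℚ
      ({z : L | z ^ (2 * m) = 1} ∪ {w : L | w ^ 2 ∈ (⊥ : IntermediateField ℚ L)}) ≤
      cyclotomicClosure.comap (IsScalarTower.toAlgHom ℚ L ℂ) from
    h (mem_adjoin_rootsOfUnity_union_sqrt hm hζ (hc m hm) hc₂ hx)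
  refine IntermediateField.adjoin_le_iff.mpr (Set.union_subset (fun z hz => ?_) fun w hw => ?_)
  · refine mem_cyclotomicClosure_of_pow_eq_one (mul_ne_zero two_ne_zero hm) ?_
    exact ((map_pow (algebraMap L ℂ) z _).symm.trans (congrArg _ hz)).trans (map_one _)
  · obtain ⟨q, hq⟩ := IntermediateField.mem_bot.mp hw
    refine mem_subfield_of_sq_eq_ratCast (K := cyclotomicClosure.toSubfield) (q := q)
      (fun n hn z hz => mem_cyclotomicClosure_of_pow_eq_one hn hz) ?_
    rw [eq_ratCast] at hq
    exact ((map_pow (algebraMap L ℂ) w 2).symm.trans (congrArg _ hq.symm)).trans (map_ratCast _ q)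

end CyclotomicClosure

section AbelianAdjoin

open IntermediateField

variable {F Ω : Type*} [Field F] [PerfectField F] [Field Ω] [Algebra F Ω] [IsAlgClosed Ω]
  {E : IntermediateField F Ω} {s : Set Ω}

theorem isAbelianGalois_of_adjoin_eq (hE : adjoin F s = E) (hs : ∀ z ∈ s, IsAlgebraic F z)
    (h_mem : ∀ (f : E →ₐ[F] Ω) (z : E), (z : Ω) ∈ s → f z ∈ E)
    (h_comm : ∀ (σ τ : Gal(E/F)) (z : E), (z : Ω) ∈ s → σ (τ z) = τ (σ z)) :
    IsAbelianGalois F E := by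
  subst hE
  have : Algebra.IsAlgebraic F (adjoin F s) := isAlgebraic_adjoin fun z hz => (hs z hz).isIntegral
  have h_apply_mem : ∀ (f : adjoin F s →ₐ[F] Ω) x, f x ∈ adjoin F s := fun f x => by
    have h_le : adjoin F s ≤ lift ((adjoin F s).comap f) := adjoin_le_iff.mpr fun z hz =>
      (mem_lift (⟨z, subset_adjoin F s hz⟩ : adjoin F s)).mpr (h_mem f _ hz)
    exact (mem_lift x).mp (h_le x.2)
  have : Normal F (adjoin F s) := normal_iff.mpr fun x => ⟨Algebra.IsIntegral.isIntegral x,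
    splits_of_splits (IsAlgClosed.splits _) fun y hy => by
      rw [← Algebra.IsAlgebraic.range_eval_eq_rootSet_minpoly] at hy
      obtain ⟨f, rfl⟩ := hy
      exact h_apply_mem f x⟩
  have : IsMulCommutative Gal(adjoin F s/F) := isMulCommutative_iff.mpr fun σ τ =>
    AlgEquiv.coe_toAlgHom_injective <| adjoin_algHom_ext F fun z hz => h_comm σ τ _ hz
  have : IsGalois F (adjoin F s) := ⟨⟩
  exact ⟨⟩

end AbelianAdjoin

namespace ModularData

open Matrix ComplexConjugate

variable {Φ : Type} [Fintype Φ] [DecidableEq Φ] (M : ModularData Φ)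

lemma conjTranspose_S_mul_S : M.Sᴴ * M.S = 1 :=
  mul_eq_one_comm.mp M.S_unitary

lemma S_zero_ne_zero (d : Φ) : M.S M.zero d ≠ 0 := fun h =>
  (M.S_zero_pos d).2.ne' (by rw [h, zero_re])

lemma conj_S_zero (d : Φ) : conj (M.S M.zero d) = M.S M.zero d :=
  conj_eq_iff_im.mpr (M.S_zero_pos d).1

lemma S_mul_S_apply (a b : Φ) : (M.S * M.S) a b = M.N a b M.zero := by
  rw [M.verlinde, mul_apply]
  refine Finset.sum_congr rfl fun d _ => ?_
  rw [M.conj_S_zero, mul_div_cancel_right₀ _ (M.S_zero_ne_zero d), M.S_symm d b]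

/-- The fusion matrix `N_a`, with complex entries. -/
def fusionMatrix (a : Φ) : Matrix Φ Φ ℂ :=
  of fun b c => (M.N a b c : ℂ)

/-- The eigenvalue `S_{ad} / S_{0d}` of the fusion matrix `N_a` on the `d`-th column of `S`. -/
noncomputable def fusionEigenvalue (d a : Φ) : ℂ :=
  M.S a d / M.S M.zero d

lemma fusionMatrix_eq (a : Φ) :
    M.fusionMatrix a = M.S * diagonal (fun d => M.fusionEigenvalue d a) * M.Sᴴ := by
  ext b c
  rw [mul_apply, fusionMatrix, of_apply, M.verlinde]
  refine Finset.sum_congr rfl fun d _ => ?_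
  rw [mul_diagonal, conjTranspose_apply, fusionEigenvalue, starRingEnd_apply]
  ring

lemma fusionMatrix_mul_S (a : Φ) :
    M.fusionMatrix a * M.S = M.S * diagonal (fun d => M.fusionEigenvalue d a) := by
  rw [fusionMatrix_eq, Matrix.mul_assoc, M.conjTranspose_S_mul_S, Matrix.mul_one]

lemma conjTranspose_S_mul_fusionMatrix (a : Φ) :
    M.Sᴴ * M.fusionMatrix a = diagonal (fun d => M.fusionEigenvalue d a) * M.Sᴴ := by
  rw [fusionMatrix_eq, ← Matrix.mul_assoc, ← Matrix.mul_assoc, M.conjTranspose_S_mul_S,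
    Matrix.one_mul]

/-- A character of the fusion ring of `M` with values in `R`, given by its values on the basis
`Φ`. -/
structure IsFusionCharacter {R : Type*} [Semiring R] (χ : Φ → R) : Prop where
  map_zero : χ M.zero = 1
  map_mul : ∀ a b, χ a * χ b = ∑ c, (M.N a b c : R) * χ c

lemma isFusionCharacter_fusionEigenvalue (d : Φ) :
    M.IsFusionCharacter (M.fusionEigenvalue d) where
  map_zero := div_self (M.S_zero_ne_zero d)
  map_mul a b := by
    have h : ∑ c, (M.N a b c : ℂ) * M.S c d = M.S b d * M.fusionEigenvalue d a :=
      (congrFun₂ (M.fusionMatrix_mul_S a) b d).trans (mul_diagonal ..)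
    simp only [fusionEigenvalue, ← mul_div_assoc, ← Finset.sum_div] at h ⊢
    rw [h, mul_comm, mul_div_assoc]
    ring

namespace IsFusionCharacter

variable {M}

lemma map {R R' : Type*} [Semiring R] [Semiring R'] {χ : Φ → R} (hχ : M.IsFusionCharacter χ)
    (f : R →+* R') : M.IsFusionCharacter fun a => f (χ a) where
  map_zero := by rw [hχ.map_zero, map_one]
  map_mul a b := by
    rw [← _root_.map_mul, hχ.map_mul, map_sum]
    simp only [_root_.map_mul, map_natCast]

lemma of_map {R R' : Type*} [Semiring R] [Semiring R'] {χ : Φ → R} (f : R →+* R')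
    (hf : Function.Injective f) (hχ : M.IsFusionCharacter fun a => f (χ a)) :
    M.IsFusionCharacter χ where
  map_zero := hf (by rw [hχ.map_zero, map_one])
  map_mul a b := hf (by simp only [_root_.map_mul, hχ.map_mul, map_sum, map_natCast])

lemma fusionMatrix_mulVec {χ : Φ → ℂ} (hχ : M.IsFusionCharacter χ) (a : Φ) :
    M.fusionMatrix a *ᵥ χ = χ a • χ :=
  funext fun b => (hχ.map_mul a b).symm

lemma ne_zero {R : Type*} [Semiring R] [Nontrivial R] {χ : Φ → R}
    (hχ : M.IsFusionCharacter χ) : χ ≠ 0 := by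
  rintro rfl
  exact zero_ne_one hχ.map_zero

-- The coordinates of `χ` in the basis of columns of `S` show which column it is proportional to.
theorem exists_eq_fusionEigenvalue {χ : Φ → ℂ} (hχ : M.IsFusionCharacter χ) :
    ∃ d, χ = M.fusionEigenvalue d := by
  have hv : M.Sᴴ *ᵥ χ ≠ 0 := fun h => hχ.ne_zero <| by
    rw [← one_mulVec χ, ← M.S_unitary, ← mulVec_mulVec, h, mulVec_zero]
  obtain ⟨d, hd⟩ := Function.ne_iff.mp hv
  refine ⟨d, funext fun a => mul_right_cancel₀ hd ?_⟩
  have h : M.Sᴴ *ᵥ (M.fusionMatrix a *ᵥ χ) =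
      diagonal (fun d => M.fusionEigenvalue d a) *ᵥ (M.Sᴴ *ᵥ χ) := by
    rw [mulVec_mulVec, M.conjTranspose_S_mul_fusionMatrix, mulVec_mulVec]
  simpa [hχ.fusionMatrix_mulVec, mulVec_smul, mulVec_diagonal] using congrFun h d

lemma isIntegral {R : Type*} [CommRing R] [IsDomain R] [CharZero R] {χ : Φ → R}
    (hχ : M.IsFusionCharacter χ) (a : Φ) : IsIntegral ℤ (χ a) := by
  refine isIntegral_of_smul_mem_submodule (Submodule.span ℤ (Set.range χ)) ?_
    (Submodule.fg_span (Set.finite_range χ)) _ fun x hx => ?_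
  · exact fun h => hχ.ne_zero <| funext fun b => by
      simpa using h.le (Submodule.subset_span (Set.mem_range_self b))
  · induction hx using Submodule.span_induction with
    | mem x hx =>
      obtain ⟨b, rfl⟩ := hx
      rw [smul_eq_mul, hχ.map_mul]
      refine Submodule.sum_mem _ fun c _ => ?_
      rw [← nsmul_eq_mul]
      exact Submodule.smul_of_tower_mem _ _ (Submodule.subset_span (Set.mem_range_self c))
    | zero => simp
    | add x y _ _ hx hy => rw [smul_add]; exact add_mem hx hy
    | smul k x _ hx => rw [smul_comm]; exact Submodule.smul_mem _ _ hx

end IsFusionCharacter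

lemma sum_conj_S_mul_S (d : Φ) : ∑ a, conj (M.S a d) * M.S a d = 1 := by
  simpa [mul_apply] using congrFun₂ M.conjTranspose_S_mul_S d d

lemma S_eq_fusionEigenvalue_mul (a d : Φ) : M.S a d = M.fusionEigenvalue d a * M.S M.zero d :=
  (div_mul_cancel₀ _ (M.S_zero_ne_zero d)).symm

lemma fusionEigenvalue_injective : Function.Injective M.fusionEigenvalue := by
  intro d e hde
  by_contra hne
  have h : ∑ a, conj (M.S a d) * M.S a e = 0 := by
    simpa [mul_apply, hne] using congrFun₂ M.conjTranspose_S_mul_S d e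
  have h' : M.S M.zero d * ∑ a, conj (M.S a d) * M.S a e = M.S M.zero e := by
    rw [← mul_one (M.S M.zero e), ← M.sum_conj_S_mul_S d, Finset.mul_sum, Finset.mul_sum]
    refine Finset.sum_congr rfl fun a _ => ?_
    rw [M.S_eq_fusionEigenvalue_mul a e, ← hde, M.S_eq_fusionEigenvalue_mul a d]
    ring
  rw [h, mul_zero] at h'
  exact M.S_zero_ne_zero e h'.symm

section Conjugates

variable {F : Type*} [Field F] {s : Matrix Φ Φ F} {i : F →+* ℂ}

lemma isFusionCharacter_of_map_eq (hs : s.map i = M.S) (d : Φ) :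
    M.IsFusionCharacter fun a => s a d / s M.zero d := by
  refine .of_map i i.injective ?_
  simpa only [map_div₀, ← map_apply (f := i), hs] using! M.isFusionCharacter_fusionEigenvalue d

theorem exists_perm_map_eq (hs : s.map i = M.S) (τ : F →+* ℂ) :
    ∃ (g : Equiv.Perm Φ) (ρ : Φ → ℂ), ∀ a b, τ (s a b) = M.S a (g b) * ρ b := by
  have hs₀ : ∀ d, s M.zero d ≠ 0 := fun d h =>
    M.S_zero_ne_zero d (by rw [← hs, map_apply, h, map_zero])
  choose g hg using fun d =>
    ((M.isFusionCharacter_of_map_eq hs d).map τ).exists_eq_fusionEigenvalue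
  have hg_inj : Function.Injective g := fun d e hde => M.fusionEigenvalue_injective <| by
    ext a
    have h : s a d / s M.zero d = s a e / s M.zero e :=
      τ.injective (congrFun ((hg d).trans (hde ▸ (hg e).symm)) a)
    simpa only [map_div₀, ← hs, map_apply, fusionEigenvalue] using congrArg i h
  refine ⟨.ofBijective g (Finite.injective_iff_bijective.mp hg_inj),
    fun d => τ (s M.zero d) / M.S M.zero (g d), fun a b => ?_⟩
  have h : τ (s a b / s M.zero b) = M.S a (g b) / M.S M.zero (g b) := congrFun (hg b) a
  rw [Equiv.ofBijective_apply, mul_div_left_comm, ← h, map_div₀,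
    mul_div_cancel₀ _ ((map_ne_zero τ).mpr (hs₀ b))]

-- `S²` has natural entries, so `τ(S)² = S²`; writing `τ(S) = S'ρ` with `S'` a column permutation
-- of `S` turns this into `S (ρ² - 1) S = 0`.
theorem exists_perm_sign_map_eq (hs : s.map i = M.S) (τ : F →+* ℂ) :
    ∃ (g : Equiv.Perm Φ) (ε : Φ → ℂ), (∀ a, ε a = 1 ∨ ε a = -1) ∧
      ∀ a b, τ (s a b) = ε a * M.S (g a) b ∧ τ (s a b) = ε b * M.S a (g b) := by
  obtain ⟨g, ρ, hρ⟩ := M.exists_perm_map_eq hs τ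
  have s_symm : ∀ a b, s a b = s b a := fun a b =>
    i.injective (by simpa only [← hs, map_apply] using M.S_symm a b)
  have s_sq : ∀ a b, (s * s) a b = M.N a b M.zero := fun a b => i.injective <| by
    rw [map_natCast, ← M.S_mul_S_apply, ← hs, ← Matrix.map_mul, map_apply]
  have h : M.S * diagonal (fun b => ρ (g.symm b) ^ 2) * M.S = M.S * M.S := by
    ext a b
    rw [M.S_mul_S_apply, ← map_natCast τ, ← s_sq, mul_apply, mul_apply, map_sum,
      ← Equiv.sum_comp g]
    refine Finset.sum_congr rfl fun c _ => ?_
    rw [mul_diagonal, g.symm_apply_apply, map_mul, s_symm c b, hρ, hρ, M.S_symm (g c) b]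
    ring
  have hdiag : diagonal (fun b => ρ (g.symm b) ^ 2) = 1 := by
    have := congrArg (fun X => M.Sᴴ * X * M.Sᴴ) h
    simpa only [Matrix.mul_assoc, M.S_unitary, Matrix.mul_one,
      ← Matrix.mul_assoc M.Sᴴ M.S, M.conjTranspose_S_mul_S, Matrix.one_mul] using this
  have hρ_sq : ∀ b, ρ b ^ 2 = 1 := fun b => by
    simpa using congrFun₂ hdiag (g b) (g b)
  refine ⟨g, ρ, fun a => sq_eq_one_iff.mp (hρ_sq a), fun a b => ⟨?_, ?_⟩⟩
  · rw [s_symm, hρ, M.S_symm, mul_comm]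
  · rw [hρ, mul_comm]

end Conjugates

-- `1 / S_{0d}²` is the sum of the `λ * conj λ` over the eigenvalues `λ` on the `d`-th column.
lemma isAlgebraic_S (a d : Φ) : IsAlgebraic ℚ (M.S a d) := by
  have hχ : ∀ b, IsAlgebraic ℚ (M.fusionEigenvalue d b) := fun b =>
    ((M.isFusionCharacter_fusionEigenvalue d).isIntegral b).tower_top.isAlgebraic
  have hsum : (M.S M.zero d ^ 2)⁻¹ =
      ∑ b, conj (M.fusionEigenvalue d b) * M.fusionEigenvalue d b := by
    simp only [fusionEigenvalue, map_div₀, conj_S_zero, div_mul_div_comm, ← Finset.sum_div,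
      sum_conj_S_mul_S, one_div, sq]
  have h₀ : IsAlgebraic ℚ (M.S M.zero d) := by
    refine (IsAlgebraic.inv_iff.mp ?_).of_pow two_pos
    rw [hsum]
    exact (IsIntegral.sum _ fun b _ =>
      (((hχ b).algHom (conjAe.restrictScalars ℚ).toAlgHom).mul (hχ b)).isIntegral).isAlgebraic
  rw [S_eq_fusionEigenvalue_mul]
  exact (hχ a).mul h₀

lemma T_eq_diagonal : M.T = diagonal fun a => M.T a a := by
  ext a b
  by_cases hab : a = b
  · rw [hab, diagonal_apply_eq]
  · rw [diagonal_apply_ne _ hab, M.T_diag a b hab]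

lemma exists_T_pow_eq_one : ∃ m : ℕ, 0 < m ∧ ∀ a, M.T a a ^ m = 1 := by
  obtain ⟨m, hm, h⟩ := M.T_order
  refine ⟨m, hm, fun a => ?_⟩
  rw [M.T_eq_diagonal, diagonal_pow] at h
  simpa using congrFun₂ h a a

lemma norm_T (a : Φ) : ‖M.T a a‖ = 1 := by
  obtain ⟨m, hm, h⟩ := M.exists_T_pow_eq_one
  exact norm_eq_one_of_pow_eq_one (h a) hm.ne'

lemma T_ne_zero (a : Φ) : M.T a a ≠ 0 :=
  norm_ne_zero_iff.mp (by rw [M.norm_T]; exact one_ne_zero)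

lemma T_mul_S_mul_T_mul_S_mul_T : M.T * (M.S * M.T * M.S) * M.T = M.S := by
  have h := congrArg (M.Sᴴ * ·) M.modular_rel
  simp only [pow_succ, pow_zero, Matrix.one_mul, ← Matrix.mul_assoc, conjTranspose_S_mul_S] at h
  simpa only [Matrix.mul_assoc] using h.symm

lemma T_mul_sum_mul_T (a b : Φ) :
    M.T a a * (∑ c, M.S a c * M.T c c * M.S c b) * M.T b b = M.S a b := by
  conv_rhs => rw [← M.T_mul_S_mul_T_mul_S_mul_T, M.T_eq_diagonal]
  rw [mul_diagonal, diagonal_mul, mul_apply]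
  simp only [mul_diagonal]

/-- The phase `T_{ga} / T_a` by which a permutation `g` changes the eigenvalues of `T`. -/
noncomputable def twist (g : Equiv.Perm Φ) (a : Φ) : ℂ :=
  M.T (g a) (g a) / M.T a a

lemma norm_twist (g : Equiv.Perm Φ) (a : Φ) : ‖M.twist g a‖ = 1 := by
  rw [twist, norm_div, M.norm_T, M.norm_T, div_one]

section Twist

variable {F : Type*} [Field F] {s : Matrix Φ Φ F} {t : Φ → F} {i τ : F →+* ℂ}

-- Apply `τ` to `S = TSTST` and compare with the same identity at the entry `(ga, gb)`.
lemma map_eq_twist_mul (hs : s.map i = M.S) (ht : ∀ a, i (t a) = M.T a a)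
    (hτ : ∀ a, τ (t a) = M.T a a) {g : Equiv.Perm Φ} {ε : Φ → ℂ} (hε : ∀ a, ε a ≠ 0)
    (hg : ∀ a b, τ (s a b) = ε a * M.S (g a) b ∧ τ (s a b) = ε b * M.S a (g b)) (a b : Φ) :
    τ (s (g a) b) = M.twist g a * M.twist g b * M.S (g a) b := by
  have h_map : τ (s a b) = M.T a a * (∑ c, τ (s a c) * M.T c c * τ (s c b)) * M.T b b := by
    simp only [← hτ, ← map_mul, ← map_sum]
    congr 1
    apply i.injective
    simp only [map_mul, map_sum, ht, ← map_apply (f := i), hs, T_mul_sum_mul_T]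
  have h_sum : ∑ c, τ (s a c) * M.T c c * τ (s c b) =
      ε a * ε b * ∑ c, M.S (g a) c * M.T c c * M.S c (g b) := by
    rw [Finset.mul_sum]
    refine Finset.sum_congr rfl fun c _ => ?_
    rw [(hg a c).1, (hg c b).2]
    ring
  have h_cancel : M.S (g a) b =
      M.T a a * (ε b * ∑ c, M.S (g a) c * M.T c c * M.S c (g b)) * M.T b b := by
    refine mul_left_cancel₀ (hε a) ?_
    rw [← (hg a b).1, h_map, h_sum]
    ring
  rw [(hg (g a) b).2, ← M.T_mul_sum_mul_T (g a) (g b), h_cancel, twist, twist]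
  have := M.T_ne_zero a
  have := M.T_ne_zero b
  field_simp

-- On the row `ga = 0` of positive numbers, `τ(S)² / S²` is positive of norm `1`.
lemma twist_mul_sq_eq_one (hs : s.map i = M.S) (ht : ∀ a, i (t a) = M.T a a)
    (hτ : ∀ a, τ (t a) = M.T a a) {g : Equiv.Perm Φ} {ε : Φ → ℂ} (hε : ∀ a, ε a = 1 ∨ ε a = -1)
    (hg : ∀ a b, τ (s a b) = ε a * M.S (g a) b ∧ τ (s a b) = ε b * M.S a (g b)) (b : Φ) :
    (M.twist g (g.symm M.zero) * M.twist g b) ^ 2 = 1 := by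
  have hε_sq : ∀ a, ε a ^ 2 = 1 := fun a => sq_eq_one_iff.mpr (hε a)
  have hε_ne : ∀ a, ε a ≠ 0 := fun a => by
    rcases hε a with h | h <;> simp [h]
  set z := M.twist g (g.symm M.zero) * M.twist g b with hz
  set r : ℝ := (M.S M.zero (g b)).re / (M.S M.zero b).re with hr
  have hre : ∀ c, ((M.S M.zero c).re : ℂ) = M.S M.zero c := fun c =>
    conj_eq_iff_re.mp (M.conj_S_zero c)
  have hzr : z ^ 2 = ((r ^ 2 : ℝ) : ℂ) := by
    have h := M.map_eq_twist_mul hs ht hτ hε_ne hg (g.symm M.zero) b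
    rw [g.apply_symm_apply, (hg M.zero b).2, ← hz] at h
    rw [hr, ofReal_pow, ofReal_div, hre, hre, div_pow,
      eq_div_iff (pow_ne_zero 2 (M.S_zero_ne_zero b)), ← mul_pow, ← h, mul_pow, hε_sq, one_mul]
  have hnorm : ‖z ^ 2‖ = 1 := by
    rw [hz, norm_pow, norm_mul, norm_twist, norm_twist, one_mul, one_pow]
  rw [hzr, norm_real, Real.norm_of_nonneg (sq_nonneg r)] at hnorm
  rw [hzr, hnorm, ofReal_one]

theorem map_sq_eq_sq (hs : s.map i = M.S) (ht : ∀ a, i (t a) = M.T a a)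
    (hτ : ∀ a, τ (t a) = M.T a a) (a b : Φ) : τ (s a b) ^ 2 = M.S a b ^ 2 := by
  obtain ⟨g, ε, hε, hg⟩ := M.exists_perm_sign_map_eq hs τ
  obtain ⟨a, rfl⟩ := g.surjective a
  have h_sq := M.twist_mul_sq_eq_one hs ht hτ hε hg
  simp only [mul_pow] at h_sq
  have h : M.twist g a ^ 2 * M.twist g b ^ 2 = 1 := by
    set u := M.twist g (g.symm M.zero) ^ 2
    linear_combination -(M.twist g a ^ 2 * M.twist g b ^ 2) * h_sq (g.symm M.zero) +
      u * M.twist g b ^ 2 * h_sq a + h_sq b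
  rw [M.map_eq_twist_mul hs ht hτ (fun a => by rcases hε a with h | h <;> simp [h]) hg a b,
    mul_pow, mul_pow, h, one_mul]

end Twist

section Commute

variable {F : Type*} [Field F] {s : Matrix Φ Φ F} {i : F →+* ℂ}

lemma exists_perm_sign_apply_eq (hs : s.map i = M.S) (τ : F →+* F) :
    ∃ (g : Equiv.Perm Φ) (ε : Φ → ℤ),
      ∀ a b, τ (s a b) = ε a * s (g a) b ∧ τ (s a b) = ε b * s a (g b) := by
  obtain ⟨g, δ, hδ, h⟩ := M.exists_perm_sign_map_eq hs (i.comp τ)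
  have h_int : ∀ a, ∃ k : ℤ, (k : ℂ) = δ a := fun a =>
    (hδ a).elim (fun ha => ⟨1, by simp [ha]⟩) fun ha => ⟨-1, by simp [ha]⟩
  choose ε hε using h_int
  refine ⟨g, ε, fun a b => ⟨i.injective ?_, i.injective ?_⟩⟩
  · simpa only [map_mul, map_intCast, hε, ← hs, Matrix.map_apply, RingHom.comp_apply]
      using (h a b).1
  · simpa only [map_mul, map_intCast, hε, ← hs, Matrix.map_apply, RingHom.comp_apply]
      using (h a b).2

theorem apply_apply_comm (hs : s.map i = M.S) (σ τ : F →+* F) (a b : Φ) :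
    σ (τ (s a b)) = τ (σ (s a b)) := by
  obtain ⟨g, ε, hσ⟩ := M.exists_perm_sign_apply_eq hs σ
  obtain ⟨h, δ, hτ⟩ := M.exists_perm_sign_apply_eq hs τ
  rw [(hτ a b).2, (hσ a b).1, map_mul, map_mul, map_intCast, map_intCast, (hσ a (h b)).1,
    (hτ (g a) b).2]
  ring

end Commute

section EntryField

open IntermediateField

variable {n : ℕ}

/-- The field generated over `ℚ` by the entries of `S` and the `n`-th roots of unity. -/
noncomputable def entryField (n : ℕ) : IntermediateField ℚ ℂ :=
  adjoin ℚ (Set.range (Function.uncurry M.S) ∪ {z | z ^ n = 1})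

lemma S_mem_entryField (n : ℕ) (a b : Φ) : M.S a b ∈ M.entryField n :=
  subset_adjoin ℚ _ (Or.inl ⟨(a, b), rfl⟩)

lemma mem_entryField_of_pow_eq_one {z : ℂ} (hz : z ^ n = 1) : z ∈ M.entryField n :=
  subset_adjoin ℚ _ (Or.inr hz)

lemma isAlgebraic_of_mem_entryField_generators (hn : n ≠ 0) :
    ∀ z ∈ Set.range (Function.uncurry M.S) ∪ {z | z ^ n = 1}, IsAlgebraic ℚ z := by
  rintro z (⟨⟨a, b⟩, rfl⟩ | hz)
  · exact M.isAlgebraic_S a b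
  · exact (IsIntegral.of_pow (Nat.pos_of_ne_zero hn) (hz ▸ isIntegral_one)).isAlgebraic

lemma finiteDimensional_entryField (hn : n ≠ 0) : FiniteDimensional ℚ (M.entryField n) := by
  have : Finite ↥(Set.range (Function.uncurry M.S) ∪ {z | z ^ n = 1}) :=
    ((Set.finite_range _).union <| (Polynomial.nthRootsFinset n (1 : ℂ)).finite_toSet.subset
      fun z hz => (Polynomial.mem_nthRootsFinset (Nat.pos_of_ne_zero hn) 1).mpr hz).to_subtype
  exact finiteDimensional_adjoin fun z hz =>
    (M.isAlgebraic_of_mem_entryField_generators hn z hz).isIntegral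

lemma exists_isPrimitiveRoot_entryField (hn : n ≠ 0) :
    ∃ ζ : M.entryField n, IsPrimitiveRoot ζ n :=
  have h := isPrimitiveRoot_exp n hn
  ⟨⟨_, M.mem_entryField_of_pow_eq_one h.pow_eq_one⟩,
    h.of_map_of_injective (f := (M.entryField n).val) Subtype.val_injective⟩

theorem isAbelianGalois_entryField (hn : n ≠ 0) : IsAbelianGalois ℚ (M.entryField n) := by
  let s : Matrix Φ Φ (M.entryField n) := fun a b => ⟨M.S a b, M.S_mem_entryField n a b⟩
  have hs : s.map (M.entryField n).val.toRingHom = M.S := rfl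
  have h_pow : ∀ z : M.entryField n, (z : ℂ) ^ n = 1 → z ^ n = 1 := fun _ h => Subtype.ext h
  obtain ⟨ζ, hζ⟩ := M.exists_isPrimitiveRoot_entryField hn
  refine isAbelianGalois_of_adjoin_eq rfl (M.isAlgebraic_of_mem_entryField_generators hn) ?_ ?_
  · rintro f z (⟨⟨a, b⟩, hz⟩ | hz)
    · obtain rfl : s a b = z := Subtype.ext hz
      obtain ⟨g, ε, hε, h⟩ := M.exists_perm_sign_map_eq hs f.toRingHom
      have hf : f (s a b) = ε a * M.S (g a) b := (h a b).1
      rcases hε a with ha | ha <;> rw [hf, ha]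
      · rw [one_mul]
        exact M.S_mem_entryField n (g a) b
      · rw [neg_one_mul]
        exact neg_mem (M.S_mem_entryField n (g a) b)
    · exact M.mem_entryField_of_pow_eq_one (by rw [← map_pow, h_pow z hz, map_one])
  · rintro σ τ z (⟨⟨a, b⟩, hz⟩ | hz)
    · obtain rfl : s a b = z := Subtype.ext hz
      exact M.apply_apply_comm hs (σ : _ →+* _) τ a b
    · obtain ⟨u, -, hσ⟩ := exists_forall_apply_eq_pow hn hζ σ
      obtain ⟨v, -, hτ⟩ := exists_forall_apply_eq_pow hn hζ τ
      rw [hσ z (h_pow z hz), hτ z (h_pow z hz), map_pow, map_pow, hσ z (h_pow z hz),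
        hτ z (h_pow z hz), pow_right_comm]

theorem S_mem_cyclotomicClosure (a b : Φ) : M.S a b ∈ cyclotomicClosure := by
  obtain ⟨m, hm, hT⟩ := M.exists_T_pow_eq_one
  have h2m : 2 * m ≠ 0 := mul_ne_zero two_ne_zero hm.ne'
  let L := M.entryField (2 * m)
  -- `DivisionRing.toRatAlgebra` is a different instance of the same type.
  let _ : Algebra ℚ L := L.algebra'
  have : FiniteDimensional ℚ L := M.finiteDimensional_entryField h2m
  have : IsAbelianGalois ℚ L := M.isAbelianGalois_entryField h2m
  let s : Matrix Φ Φ L := fun a b => ⟨M.S a b, M.S_mem_entryField _ a b⟩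
  let t : Φ → L := fun a => ⟨M.T a a, M.mem_entryField_of_pow_eq_one
    (by rw [mul_comm, pow_mul, hT, one_pow])⟩
  obtain ⟨ζ, hζ⟩ := M.exists_isPrimitiveRoot_entryField h2m
  refine algebraMap_mem_cyclotomicClosure (x := s a b) hm.ne' hζ fun σ hσ =>
    (algebraMap L ℂ).injective ?_
  have hσt : ∀ a, algebraMap L ℂ (σ (t a)) = M.T a a := fun a =>
    congrArg (algebraMap L ℂ) (mem_fixingRootsOfUnity.mp hσ (t a) (Subtype.ext (hT a)))
  rw [map_pow, map_pow, map_pow]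
  exact M.map_sq_eq_sq (s := s) (i := algebraMap L ℂ) (τ := (algebraMap L ℂ).comp σ)
    rfl (fun _ => rfl) hσt a b

end EntryField

end ModularData

/-- Galois symmetry. For every ring automorphism `τ` of `ℂ` there are a
permutation `g` of `Φ` and signs `ε : Φ → {±1}` with
`τ (S_{ab}) = ε(a) S_{ga,b} = ε(b) S_{a,gb}`; moreover all entries of `S` lie in a cyclotomic
field `ℚ(e^{2πi/n})`. -/
theorem modularData_galois
    {Φ : Type} [Fintype Φ] [DecidableEq Φ] (M : ModularData Φ) :
    (∀ τ : ℂ ≃+* ℂ, ∃ (g : Equiv.Perm Φ) (ε : Φ → ℂ),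
      (∀ a, ε a = 1 ∨ ε a = -1) ∧
      (∀ a b, τ (M.S a b) = ε a * M.S (g a) b ∧ τ (M.S a b) = ε b * M.S a (g b))) ∧
    (∃ n : ℕ, 0 < n ∧ ∀ a b, M.S a b ∈
      IntermediateField.adjoin ℚ
        ({Complex.exp (2 * (Real.pi : ℂ) * Complex.I / (n : ℂ))} : Set ℂ)) := by
  obtain ⟨n, hn, hS⟩ := exists_forall_mem_cyclotomicSubfield fun p : Φ × Φ =>
    M.S_mem_cyclotomicClosure p.1 p.2
  exact ⟨fun τ => M.exists_perm_sign_map_eq (i := RingHom.id ℂ) rfl (τ : ℂ →+* ℂ),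
    n, hn, fun a b => hS (a, b)⟩
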